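/- Let 𝒳 be a finite alphabet, (Θ, w) a probability space, {P_θ} a measurable family of distributions on 𝒳, P_{X^n}(x) = ∫_Θ ∏_{i=1}^n P_θ(x_i) dw(θ) the mixed memoryless source, and P_{X̄^n}(x) = ∏_{i=1}^n P_{X̄}(x_i) a stationary memoryless alternative with P_{X̄}(x) > 0 for all x. For θ ∈ Θ set D_θ = D(P_θ‖P_{X̄}) and V_θ = Σ_x P_θ(x)( log(P_θ(x)/P_{X̄}(x)) − D_θ )², assume V_θ > 0 for all θ, and let Φ_θ(S) = G(S/√V_θ) with G the standard normal CDF. Then for all R, S ∈ ℝ: limsup_{n→∞} Pr{ (1/n) log( P_{X^n}(X^n)/P_{X̄^n}(X^n) ) ≤ R + S/√n } ≥ w({θ : D_θ < R}) + ∫_{{θ : D_θ = R}} Φ_θ(S) dw(θ), where the probability on the left is taken under P_{X^n}. -/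

import Mathlib

open scoped BigOperators
open MeasureTheory

/-- Probability of a set `A` under a distribution `P` on a finite type. -/
noncomputable def prob {α : Type*} [Fintype α] (P : α → ℝ) (A : Set α) : ℝ :=
  ∑ x, A.indicator P x

/-- Kullback–Leibler divergence `D(P‖Q) = ∑_x P(x) log (P(x)/Q(x))` on a finite alphabet. -/
noncomputable def KL {𝒳 : Type*} [Fintype 𝒳] (P Q : 𝒳 → ℝ) : ℝ :=
  ∑ x, P x * Real.log (P x / Q x)

/-- The variance of the divergence density,
`V(P,Q) = ∑_x P(x) (log (P(x)/Q(x)) − D(P‖Q))²`. -/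
noncomputable def Vdiv {𝒳 : Type*} [Fintype 𝒳] (P Q : 𝒳 → ℝ) : ℝ :=
  ∑ x, P x * (Real.log (P x / Q x) - KL P Q) ^ 2

/-- The standard normal cumulative distribution function
`G(x) = (1/√(2π)) ∫_{-∞}^x e^{-u²/2} du`. -/
noncomputable def stdGauss (x : ℝ) : ℝ :=
  ∫ u in Set.Iic x, Real.exp (-u ^ 2 / 2) / Real.sqrt (2 * Real.pi)

open ProbabilityTheory Filter Topology

lemma prob_eq_pi {𝒳 : Type*} [Fintype 𝒳] [MeasurableSpace 𝒳] [MeasurableSingletonClass 𝒳]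
    (p : 𝒳 → ℝ) (μ : Measure 𝒳) [IsProbabilityMeasure μ] (hμ : ∀ x, μ.real {x} = p x)
    (n : ℕ) (A : Set (Fin n → 𝒳)) :
    prob (fun x : Fin n → 𝒳 => ∏ i, p (x i)) A
      = (Measure.infinitePi (fun _ : ℕ => μ)).real {ω | (fun i : Fin n => ω i) ∈ A} := by
  classical
  have hmap : (Measure.infinitePi (fun _ : ℕ => μ)).map (fun ω (i : Fin n) => ω i)
      = Measure.pi (fun _ : Fin n => μ) := by
    symm
    apply Measure.pi_eq
    intro s hs
    rw [Measure.map_apply (by fun_prop) (MeasurableSet.univ_pi hs)]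
    have : (fun ω : ℕ → 𝒳 => fun i : Fin n => ω i) ⁻¹' (Set.univ.pi s)
        = Set.pi (Finset.range n) (fun k => if h : k < n then s ⟨k, h⟩ else Set.univ) := by
      ext ω
      simp only [Set.mem_preimage, Set.mem_pi, Set.mem_univ, true_imp_iff, Finset.coe_range,
        Set.mem_Iio]
      constructor
      · intro h k hk
        simpa [hk] using h ⟨k, hk⟩
      · intro h i
        simpa using h i i.2
    rw [this, Measure.infinitePi_pi]
    · rw [Finset.prod_range]
      simp
    · intro i hi
      have := Finset.mem_range.1 hi
      simp only [this, dite_true]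
      exact hs _
  have h1 : (Measure.infinitePi (fun _ : ℕ => μ)).real {ω | (fun i : Fin n => ω i) ∈ A}
      = (Measure.pi (fun _ : Fin n => μ)).real A := by
    rw [← hmap, map_measureReal_apply (by fun_prop) (Set.toFinite A).measurableSet]
    rfl
  rw [h1]
  have h2 : A = ((Finset.univ.filter (· ∈ A) : Finset (Fin n → 𝒳)) : Set (Fin n → 𝒳)) := by
    ext; simp
  conv_rhs => rw [h2]
  rw [← sum_measureReal_singleton, prob, Finset.sum_filter]
  apply Finset.sum_congr rfl
  intro x _
  have : (Measure.pi (fun _ : Fin n => μ)).real {x} = ∏ i, p (x i) := by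
    simp [Measure.real, Measure.pi_singleton, ENNReal.toReal_prod, ← hμ]
  by_cases hx : x ∈ A <;> simp [hx, this]

lemma stdGauss_eq (x : ℝ) : stdGauss x = (gaussianReal 0 1).real (Set.Iic x) := by
  rw [Measure.real, gaussianReal_apply_eq_integral _ one_ne_zero, ENNReal.toReal_ofReal]
  · unfold stdGauss
    congr 1
    ext u
    simp [gaussianPDFReal_def, div_eq_inv_mul]
  · exact integral_nonneg (fun _ => gaussianPDFReal_nonneg _ _ _)

lemma stdGauss_eq_cdf : stdGauss = fun x => cdf (gaussianReal 0 1) x := by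
  ext x
  rw [stdGauss_eq, cdf_eq_real]

lemma stdGauss_mono : Monotone stdGauss := by
  rw [stdGauss_eq_cdf]; exact monotone_cdf _

lemma stdGauss_cont : Continuous stdGauss := by
  rw [continuous_iff_continuousAt]
  intro x
  have hint : Integrable (fun u : ℝ => Real.exp (-u ^ 2 / 2) / Real.sqrt (2 * Real.pi)) := by
    convert integrable_gaussianPDFReal 0 1 using 1
    ext u
    simp [gaussianPDFReal_def, div_eq_inv_mul]
  have h : ∀ y, stdGauss y = stdGauss 0 + ∫ u in (0:ℝ)..y,
      Real.exp (-u ^ 2 / 2) / Real.sqrt (2 * Real.pi) := by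
    intro y
    rw [← intervalIntegral.integral_Iic_sub_Iic hint.integrableOn hint.integrableOn]
    unfold stdGauss; ring
  have : stdGauss = fun y => stdGauss 0 + ∫ u in (0:ℝ)..y,
      Real.exp (-u ^ 2 / 2) / Real.sqrt (2 * Real.pi) := funext h
  rw [this]
  exact (continuous_const.add (intervalIntegral.continuous_primitive
    (fun a b => hint.intervalIntegrable) 0)).continuousAt

lemma clt_fin {𝒳 : Type*} [Fintype 𝒳] (p : 𝒳 → ℝ) (hp0 : ∀ x, 0 ≤ p x) (hp1 : ∑ x, p x = 1)
    (f : 𝒳 → ℝ) (m V : ℝ) (hm : ∑ x, p x * f x = m) (hVe : ∑ x, p x * (f x - m) ^ 2 = V)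
    (hV : 0 < V) (T : ℝ) :
    Tendsto (fun n : ℕ => prob (fun x : Fin n → 𝒳 => ∏ i, p (x i))
      {x | ∑ i, f (x i) - n * m ≤ Real.sqrt n * T}) atTop (𝓝 (stdGauss (T / Real.sqrt V))) := by
  classical
  let _ : MeasurableSpace 𝒳 := ⊤
  have : MeasurableSingletonClass 𝒳 := ⟨fun _ => trivial⟩
  let pm : PMF 𝒳 := PMF.ofFintype (fun x => ENNReal.ofReal (p x)) (by
    rw [← ENNReal.ofReal_sum_of_nonneg (fun x _ => hp0 x), hp1, ENNReal.ofReal_one])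
  let μ : Measure 𝒳 := pm.toMeasure
  have hμ : ∀ x, μ.real {x} = p x := by
    intro x
    simp [μ, Measure.real, pm, hp0 x]
  let Ω := Measure.infinitePi (fun _ : ℕ => μ)
  have hV' : 0 < Real.sqrt V := Real.sqrt_pos.2 hV
  let g : 𝒳 → ℝ := fun x => (f x - m) / Real.sqrt V
  let X : ℕ → (ℕ → 𝒳) → ℝ := fun k ω => g (ω k)
  have hg : Measurable g := measurable_of_finite g
  have hXm : ∀ k, Measurable (X k) := fun k => hg.comp (measurable_pi_apply k)
  have hid : ∀ k, Ω.map (X k) = μ.map g := by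
    intro k
    have : X k = g ∘ (fun ω : ℕ → 𝒳 => ω k) := rfl
    rw [this, ← Measure.map_map hg (measurable_pi_apply k), Measure.infinitePi_map_eval]
  have hint : ∀ g : 𝒳 → ℝ, ∫ ω, g (ω 0) ∂Ω = ∑ x, p x * g x := by
    intro g
    rw [← integral_map (φ := fun ω : ℕ → 𝒳 => ω 0) (f := g) (measurable_pi_apply 0).aemeasurable
      (measurable_of_finite g).aestronglyMeasurable, Measure.infinitePi_map_eval,
      integral_fintype (Integrable.of_finite)]
    simp [hμ]
  have hE : ∫ ω, X 0 ω ∂Ω = 0 := by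
    refine (hint g).trans ?_
    have : ∀ x, p x * g x = (p x * f x - p x * m) / Real.sqrt V := by
      intro x; simp only [g]; ring
    simp_rw [this]
    rw [← Finset.sum_div, Finset.sum_sub_distrib, ← Finset.sum_mul, hp1, hm]
    simp
  have hE2 : ∫ ω, (X 0 ^ 2) ω ∂Ω = 1 := by
    refine (hint (fun x => g x ^ 2)).trans ?_
    have : ∀ x, p x * g x ^ 2 = (p x * (f x - m) ^ 2) / V := by
      intro x; simp only [g, div_pow, Real.sq_sqrt hV.le]; ring
    simp_rw [this]
    rw [← Finset.sum_div, hVe, div_self hV.ne']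
  have hind : iIndepFun X Ω := by
    exact iIndepFun_infinitePi (fun _ => hg)
  have hclt := tendstoInDistribution_inv_sqrt_mul_sum (P := Ω) (X := X)
    (P' := gaussianReal 0 1) (Y := id) (HasLaw.id) hE hE2
    hind (fun i => ⟨(hXm i).aemeasurable, (hXm 0).aemeasurable, by rw [hid, hid]⟩)
  have h := ProbabilityMeasure.tendsto_measure_of_null_frontier_of_tendsto' hclt.tendsto
    (E := Set.Iic (T / Real.sqrt V)) (by
      simp only [ProbabilityMeasure.coe_mk, Measure.map_id, frontier_Iic]
      have := nullSingletonClass_gaussianReal (μ := 0) (v := 1) one_ne_zero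
      exact measure_singleton _)
  simp only [ProbabilityMeasure.coe_mk, Measure.map_id] at h
  have h' := (ENNReal.tendsto_toReal (measure_ne_top (gaussianReal 0 1) _)).comp h
  rw [stdGauss_eq]
  refine h'.congr' ?_
  filter_upwards [eventually_gt_atTop 0] with n hn
  rw [prob_eq_pi p μ hμ]
  simp only [Function.comp]
  rw [Measure.map_apply (by fun_prop) measurableSet_Iic]
  change Ω.real _ = Ω.real _
  congr 1
  ext ω
  have hn' : 0 < Real.sqrt n := Real.sqrt_pos.2 (by exact_mod_cast hn)
  simp only [Set.mem_preimage, Set.mem_Iic, Set.mem_ofPred_eq, X, g]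
  rw [Finset.sum_range, inv_mul_le_iff₀ (by positivity), ← Finset.sum_div,
    Finset.sum_sub_distrib, ← mul_div_assoc, div_le_div_iff_of_pos_right hV']
  simp

lemma key_decomp {𝒳 : Type*} [Fintype 𝒳] (p q : 𝒳 → ℝ) (hp0 : ∀ x, 0 ≤ p x) (hq : ∀ x, 0 < q x)
    (n : ℕ) (r : (Fin n → 𝒳) → ℝ) (hr0 : ∀ x, 0 ≤ r x) (hr1 : ∑ x, r x = 1) (a b : ℝ) :
    prob (fun x : Fin n → 𝒳 => ∏ i, p (x i)) {x | ∑ i, Real.log (p (x i) / q (x i)) ≤ b - a}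
      - Real.exp (-a)
    ≤ prob (fun x : Fin n → 𝒳 => ∏ i, p (x i)) {x | r x ≤ (∏ i, q (x i)) * Real.exp b} := by
  classical
  have : ∑ x, Real.exp (-a) * r x = Real.exp (-a) := by rw [← Finset.mul_sum, hr1, mul_one]
  rw [sub_le_iff_le_add, ← this]
  unfold prob
  rw [← Finset.sum_add_distrib]
  apply Finset.sum_le_sum
  intro x _
  have hpn : 0 ≤ ∏ i, p (x i) := Finset.prod_nonneg fun i _ => hp0 _
  have hqn : 0 < ∏ i, q (x i) := Finset.prod_pos fun i _ => hq _
  have her : 0 ≤ Real.exp (-a) * r x := mul_nonneg (Real.exp_pos _).le (hr0 x)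
  simp only [Set.indicator_apply, Set.mem_ofPred_eq]
  by_cases h2 : r x ≤ (∏ i, q (x i)) * Real.exp b
  · rw [if_pos h2]; split_ifs <;> linarith
  rw [if_neg h2, zero_add]
  split_ifs with h1
  swap
  · exact her
  rcases hpn.eq_or_lt with h0 | h0
  · rw [← h0]; exact her
  have hp : ∀ i, p (x i) ≠ 0 := fun i hi => h0.ne' (Finset.prod_eq_zero (Finset.mem_univ i) hi)
  rw [← Real.log_prod (fun i _ => div_ne_zero (hp i) (hq _).ne'), Finset.prod_div_distrib,
    Real.log_le_iff_le_exp (by positivity), div_le_iff₀ hqn, sub_eq_add_neg, add_comm b,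
    Real.exp_add] at h1
  push Not at h2
  calc _ ≤ _ := h1
    _ = Real.exp (-a) * ((∏ i, q (x i)) * Real.exp b) := by ring
    _ ≤ _ := by gcongr

lemma prob_nonneg' {α : Type*} [Fintype α] (P : α → ℝ) (hP : ∀ x, 0 ≤ P x) (A : Set α) :
    0 ≤ prob P A :=
  Finset.sum_nonneg fun x _ => Set.indicator_nonneg (fun x _ => hP x) x

lemma prob_le_one' {α : Type*} [Fintype α] (P : α → ℝ) (hP : ∀ x, 0 ≤ P x)
    (h1 : ∑ x, P x = 1) (A : Set α) : prob P A ≤ 1 := by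
  rw [← h1]
  exact Finset.sum_le_sum fun x _ => Set.indicator_le_self' (fun x _ => hP x) x

lemma sum_prod_one {𝒳 : Type*} [Fintype 𝒳] (p : 𝒳 → ℝ) (hp1 : ∑ x, p x = 1) (n : ℕ) :
    ∑ x : Fin n → 𝒳, ∏ i, p (x i) = 1 := by
  classical
  have := (Finset.prod_univ_sum (fun _ : Fin n => (Finset.univ : Finset 𝒳)) (fun _ y => p y)).symm
  rw [Fintype.piFinset_univ] at this
  rw [this]
  simp [hp1]

lemma lower_ev {𝒳 : Type*} [Fintype 𝒳] (p q : 𝒳 → ℝ) (hp0 : ∀ x, 0 ≤ p x) (hp1 : ∑ x, p x = 1)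
    (hq : ∀ x, 0 < q x) (hV : 0 < Vdiv p q)
    (r : (n : ℕ) → (Fin n → 𝒳) → ℝ) (hr0 : ∀ n x, 0 ≤ r n x) (hr1 : ∀ n, ∑ x, r n x = 1)
    (b : ℕ → ℝ) (T γ : ℝ) (hγ : 0 < γ)
    (hb : ∀ᶠ n : ℕ in atTop, n * KL p q + Real.sqrt n * T + Real.sqrt n * γ ≤ b n)
    (ε : ℝ) (hε : 0 < ε) :
    ∀ᶠ n : ℕ in atTop, stdGauss (T / Real.sqrt (Vdiv p q)) - ε ≤
      prob (fun x : Fin n → 𝒳 => ∏ i, p (x i))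
        {x | r n x ≤ (∏ i, q (x i)) * Real.exp (b n)} := by
  have h1 := clt_fin p hp0 hp1 (fun x => Real.log (p x / q x)) (KL p q) (Vdiv p q) rfl rfl hV T
  have h2 : Tendsto (fun n : ℕ => Real.exp (-(Real.sqrt n * γ))) atTop (𝓝 0) := by
    refine Real.tendsto_exp_neg_atTop_nhds_zero.comp ?_
    exact (Real.tendsto_sqrt_atTop.comp tendsto_natCast_atTop_atTop).atTop_mul_const hγ
  have h3 := h1.sub h2
  rw [sub_zero] at h3
  filter_upwards [h3.eventually (lt_mem_nhds (sub_lt_self _ hε)), hb] with n hn hbn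
  refine hn.le.trans (le_trans ?_ (key_decomp p q hp0 hq n (r n) (hr0 n) (hr1 n)
    (Real.sqrt n * γ) (b n)))
  gcongr
  unfold prob
  refine Finset.sum_le_sum fun x _ => ?_
  refine Set.indicator_le_indicator_of_subset ?_ (fun x => Finset.prod_nonneg fun i _ => hp0 _) x
  intro x hx
  simp only [Set.mem_ofPred_eq] at hx ⊢
  linarith

lemma point_ev {𝒳 : Type*} [Fintype 𝒳] (p q : 𝒳 → ℝ) (hp0 : ∀ x, 0 ≤ p x) (hp1 : ∑ x, p x = 1)
    (hq : ∀ x, 0 < q x) (hV : 0 < Vdiv p q)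
    (r : (n : ℕ) → (Fin n → 𝒳) → ℝ) (hr0 : ∀ n x, 0 ≤ r n x) (hr1 : ∀ n, ∑ x, r n x = 1)
    (R S : ℝ) (ε : ℝ) (hε : 0 < ε) :
    ∀ᶠ n : ℕ in atTop, (if KL p q < R then 1 else
        if KL p q = R then stdGauss (S / Real.sqrt (Vdiv p q)) else 0) - ε ≤
      prob (fun x : Fin n → 𝒳 => ∏ i, p (x i))
        {x | r n x ≤ (∏ i, q (x i)) * Real.exp (n * R + Real.sqrt n * S)} := by
  have hsV : 0 < Real.sqrt (Vdiv p q) := Real.sqrt_pos.2 hV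
  split_ifs with hlt heq
  · have hlim : Tendsto (fun T : ℝ => stdGauss (T / Real.sqrt (Vdiv p q))) atTop (𝓝 1) := by
      rw [stdGauss_eq_cdf]
      exact (tendsto_cdf_atTop _).comp (tendsto_id.atTop_div_const hsV)
    obtain ⟨T, hT⟩ := (hlim.eventually (lt_mem_nhds (show 1 - ε / 2 < 1 by linarith))).exists
    have hs : Tendsto (fun n : ℕ => Real.sqrt n * (R - KL p q)) atTop atTop :=
      (Real.tendsto_sqrt_atTop.comp tendsto_natCast_atTop_atTop).atTop_mul_const (by linarith)
    filter_upwards [lower_ev p q hp0 hp1 hq hV r hr0 hr1 (fun n => n * R + Real.sqrt n * S) T 1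
      one_pos (by
        filter_upwards [hs.eventually_ge_atTop (T + 1 - S)] with n hn
        have h1 := mul_le_mul_of_nonneg_left hn (Real.sqrt_nonneg (n : ℝ))
        have h2 : Real.sqrt n * (Real.sqrt n * (R - KL p q)) = n * (R - KL p q) := by
          rw [← mul_assoc, Real.mul_self_sqrt (Nat.cast_nonneg n)]
        rw [h2] at h1
        linarith) (ε / 2) (by linarith)] with n hn
    linarith
  · have hlim : Tendsto (fun γ : ℝ => stdGauss ((S - γ) / Real.sqrt (Vdiv p q))) (𝓝[>] 0)
        (𝓝 (stdGauss (S / Real.sqrt (Vdiv p q)))) := by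
      have hc : Continuous (fun γ : ℝ => stdGauss ((S - γ) / Real.sqrt (Vdiv p q))) :=
        stdGauss_cont.comp (by fun_prop)
      have := hc.tendsto 0
      rw [sub_zero] at this
      exact this.mono_left nhdsWithin_le_nhds
    obtain ⟨γ, hγ, hγ0⟩ := ((hlim.eventually (lt_mem_nhds (show stdGauss (S /
      Real.sqrt (Vdiv p q)) - ε / 2 < stdGauss (S / Real.sqrt (Vdiv p q)) by linarith))).and
      self_mem_nhdsWithin).exists
    filter_upwards [lower_ev p q hp0 hp1 hq hV r hr0 hr1 (fun n => n * R + Real.sqrt n * S)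
      (S - γ) γ hγ0 (Eventually.of_forall fun n => by rw [heq]; apply le_of_eq; ring)
      (ε / 2) (by linarith)] with n hn
    linarith
  · refine Eventually.of_forall fun n => ?_
    have := prob_nonneg' (fun x : Fin n → 𝒳 => ∏ i, p (x i))
      (fun x => Finset.prod_nonneg fun i _ => hp0 _)
      {x | r n x ≤ (∏ i, q (x i)) * Real.exp (n * R + Real.sqrt n * S)}
    linarith

lemma event_eq {𝒳 : Type*} [Fintype 𝒳] (q : 𝒳 → ℝ) (hq : ∀ x, 0 < q x)
    (n : ℕ) (hn : 0 < n) (r : (Fin n → 𝒳) → ℝ) (hr0 : ∀ x, 0 ≤ r x) (R S : ℝ) :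
    prob r {x | (1 / (n : ℝ)) * Real.log (r x / ∏ i, q (x i)) ≤ R + S / Real.sqrt (n : ℝ)}
    = prob r {x | r x ≤ (∏ i, q (x i)) * Real.exp (n * R + Real.sqrt n * S)} := by
  classical
  unfold prob
  refine Finset.sum_congr rfl fun x _ => ?_
  simp only [Set.indicator_apply, Set.mem_ofPred_eq]
  rcases (hr0 x).eq_or_lt with h0 | h0
  · simp [← h0]
  have hqn : 0 < ∏ i, q (x i) := Finset.prod_pos fun i _ => hq _
  have hn' : (0:ℝ) < n := by exact_mod_cast hn
  have hs : 0 < Real.sqrt n := Real.sqrt_pos.2 hn'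
  have : (1 / (n : ℝ)) * Real.log (r x / ∏ i, q (x i)) ≤ R + S / Real.sqrt (n : ℝ) ↔
      r x ≤ (∏ i, q (x i)) * Real.exp (n * R + Real.sqrt n * S) := by
    rw [one_div, inv_mul_le_iff₀ hn', Real.log_le_iff_le_exp (by positivity), div_le_iff₀' hqn]
    have : (n:ℝ) * (R + S / Real.sqrt n) = n * R + Real.sqrt n * S := by
      have h := Real.mul_self_sqrt hn'.le
      rw [mul_add]
      congr 1
      field_simp
      rw [sq, h, mul_comm]
    rw [this]
  simp only [this]

lemma prob_mix {𝒳 Θ : Type*} [Fintype 𝒳] [MeasurableSpace Θ]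
    (w : Measure Θ) (n : ℕ) (F : Θ → (Fin n → 𝒳) → ℝ)
    (hF : ∀ x, Integrable (fun θ => F θ x) w) (A : Set (Fin n → 𝒳)) :
    prob (fun x => ∫ θ, F θ x ∂w) A = ∫ θ, prob (F θ) A ∂w := by
  classical
  unfold prob
  rw [integral_finsetSum]
  · refine Finset.sum_congr rfl fun x _ => ?_
    by_cases hx : x ∈ A <;> simp [hx]
  · intro x _
    by_cases hx : x ∈ A <;> simp [hx, hF]

/-- Inequality (16): the limsup of the mixed-source probability of the event
`(1/n) log (P_{X^n}(X^n)/P_{X̄^n}(X^n)) ≤ R + S/√n` is at least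
`w({θ : D_θ < R}) + ∫_{{θ : D_θ = R}} Φ_θ(S) dw(θ)`. -/
theorem stmt_11 {𝒳 Θ : Type*} [Fintype 𝒳] [MeasurableSpace Θ]
    (w : Measure Θ) [IsProbabilityMeasure w]
    (P : Θ → 𝒳 → ℝ)
    (hmeas : ∀ x : 𝒳, Measurable fun θ => P θ x)
    (hdist : ∀ θ, (∀ x, 0 ≤ P θ x) ∧ (∑ x, P θ x) = 1)
    (Q : 𝒳 → ℝ) (hQ0 : ∀ x, 0 < Q x) (hQ1 : ∑ x, Q x = 1)
    (hV : ∀ θ, 0 < Vdiv (P θ) Q)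
    (R S : ℝ) :
    Filter.limsup (fun n : ℕ =>
      prob (fun x : Fin n → 𝒳 => ∫ θ, (∏ i, P θ (x i)) ∂w)
        {x | (1 / (n : ℝ)) * Real.log
          ((∫ θ, (∏ i, P θ (x i)) ∂w) / ∏ i, Q (x i)) ≤ R + S / Real.sqrt (n : ℝ)})
      Filter.atTop ≥
    (w {θ | KL (P θ) Q < R}).toReal +
      ∫ θ in {θ | KL (P θ) Q = R}, stdGauss (S / Real.sqrt (Vdiv (P θ) Q)) ∂w := by
  classical
  have hPle : ∀ θ x, P θ x ≤ 1 := fun θ x => by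
    rw [← (hdist θ).2]
    exact Finset.single_le_sum (fun y _ => (hdist θ).1 y) (Finset.mem_univ x)
  have hprod0 : ∀ (n : ℕ) (θ : Θ) (x : Fin n → 𝒳), 0 ≤ ∏ i, P θ (x i) := fun n θ x =>
    Finset.prod_nonneg fun i _ => (hdist θ).1 _
  have hprodm : ∀ (n : ℕ) (x : Fin n → 𝒳), Measurable fun θ => ∏ i, P θ (x i) := fun n x =>
    Finset.measurable_prod _ fun i _ => hmeas _
  have hprodi : ∀ (n : ℕ) (x : Fin n → 𝒳), Integrable (fun θ => ∏ i, P θ (x i)) w := by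
    intro n x
    refine Integrable.of_bound (hprodm n x).aestronglyMeasurable 1 (Eventually.of_forall fun θ => ?_)
    rw [Real.norm_of_nonneg (hprod0 n θ x)]
    exact Finset.prod_le_one (fun i _ => (hdist θ).1 _) (fun i _ => hPle θ _)
  set r : (n : ℕ) → (Fin n → 𝒳) → ℝ := fun n x => ∫ θ, ∏ i, P θ (x i) ∂w with hr
  have hr0 : ∀ n x, 0 ≤ r n x := fun n x => integral_nonneg fun θ => hprod0 n θ x
  have hr1 : ∀ n, ∑ x, r n x = 1 := by
    intro n
    simp only [hr]
    rw [← integral_finsetSum _ (fun x _ => hprodi n x)]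
    simp [sum_prod_one _ (hdist _).2]
  set f : ℕ → Θ → ℝ := fun n θ => prob (fun x : Fin n → 𝒳 => ∏ i, P θ (x i))
    {x | r n x ≤ (∏ i, Q (x i)) * Real.exp (n * R + Real.sqrt n * S)} with hf
  set h : Θ → ℝ := fun θ => if KL (P θ) Q < R then 1 else
        if KL (P θ) Q = R then stdGauss (S / Real.sqrt (Vdiv (P θ) Q)) else 0 with hh
  have hKLm : Measurable fun θ => KL (P θ) Q := by
    unfold KL
    exact Finset.measurable_sum _ fun x _ => (hmeas x).mul ((hmeas x).div_const _).log
  have hVm : Measurable fun θ => Vdiv (P θ) Q := by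
    unfold Vdiv
    exact Finset.measurable_sum _ fun x _ => (hmeas x).mul
      ((((hmeas x).div_const _).log.sub hKLm).pow_const 2)
  have hGm : Measurable fun θ => stdGauss (S / Real.sqrt (Vdiv (P θ) Q)) :=
    stdGauss_cont.measurable.comp (measurable_const.div hVm.sqrt)
  have hA1 : MeasurableSet {θ | KL (P θ) Q < R} := measurableSet_lt hKLm measurable_const
  have hA2 : MeasurableSet {θ | KL (P θ) Q = R} := measurableSet_eq_fun hKLm measurable_const
  have hhm : Measurable h :=
    Measurable.ite hA1 measurable_const (Measurable.ite hA2 hGm measurable_const)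
  have hG01 : ∀ t, 0 ≤ stdGauss t ∧ stdGauss t ≤ 1 := fun t => by
    rw [stdGauss_eq]; exact ⟨measureReal_nonneg, measureReal_le_one⟩
  have hh01 : ∀ θ, 0 ≤ h θ ∧ h θ ≤ 1 := by
    intro θ
    simp only [hh]
    split_ifs
    · norm_num
    · exact hG01 _
    · norm_num
  have hfm : ∀ n, Measurable (f n) := by
    intro n
    simp only [hf, prob]
    refine Finset.measurable_sum _ fun x _ => ?_
    simp only [Set.indicator_apply]
    split_ifs
    · exact hprodm n x
    · exact measurable_const
  have hf0 : ∀ n θ, 0 ≤ f n θ := fun n θ => prob_nonneg' _ (hprod0 n θ) _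
  have hf1 : ∀ n θ, f n θ ≤ 1 := fun n θ =>
    prob_le_one' _ (hprod0 n θ) (sum_prod_one _ (hdist θ).2 n) _
  have hfi : ∀ n, Integrable (f n) w := fun n =>
    Integrable.of_bound (hfm n).aestronglyMeasurable 1 (Eventually.of_forall fun θ => by
      rw [Real.norm_of_nonneg (hf0 n θ)]; exact hf1 n θ)
  have hmin : Tendsto (fun n => ∫ θ, min (f n θ) (h θ) ∂w) atTop (𝓝 (∫ θ, h θ ∂w)) := by
    refine tendsto_integral_of_dominated_convergence (fun _ => 1)
      (fun n => ((hfm n).min hhm).aestronglyMeasurable) (integrable_const _)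
      (fun n => Eventually.of_forall fun θ => ?_) (Eventually.of_forall fun θ => ?_)
    · rw [Real.norm_of_nonneg (le_min (hf0 n θ) (hh01 θ).1)]
      exact (min_le_left _ _).trans (hf1 n θ)
    · rw [tendsto_order]
      refine ⟨fun a ha => ?_, fun a ha => Eventually.of_forall fun n =>
        lt_of_le_of_lt (min_le_right _ _) ha⟩
      filter_upwards [point_ev (P θ) Q (hdist θ).1 (hdist θ).2 hQ0 (hV θ) r hr0 hr1 R S
        ((h θ - a) / 2) (by linarith)] with n hn
      refine lt_min ?_ ha
      have : h θ - (h θ - a) / 2 ≤ f n θ := hn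
      linarith
  have hRHS : (w {θ | KL (P θ) Q < R}).toReal +
      ∫ θ in {θ | KL (P θ) Q = R}, stdGauss (S / Real.sqrt (Vdiv (P θ) Q)) ∂w = ∫ θ, h θ ∂w := by
    have e : h = fun θ => ({θ | KL (P θ) Q < R}.indicator (fun _ => (1:ℝ)) θ) +
        ({θ | KL (P θ) Q = R}.indicator (fun θ => stdGauss (S / Real.sqrt (Vdiv (P θ) Q))) θ) := by
      ext θ
      simp only [hh, Set.indicator_apply, Set.mem_ofPred_eq]
      by_cases h1 : KL (P θ) Q < R
      · simp [h1, h1.ne]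
      · simp [h1]
    have hGi : Integrable (fun θ => stdGauss (S / Real.sqrt (Vdiv (P θ) Q))) w :=
      Integrable.of_bound hGm.aestronglyMeasurable 1 (Eventually.of_forall fun θ => by
        rw [Real.norm_of_nonneg (hG01 _).1]; exact (hG01 _).2)
    rw [e, integral_add ((integrable_const _).indicator hA1) (hGi.indicator hA2),
      integral_indicator hA1, integral_indicator hA2]
    simp [Measure.real]
  rw [hRHS, ge_iff_le]
  have hev : ∀ n : ℕ, 0 < n → prob (r n)
      {x | (1 / (n : ℝ)) * Real.log (r n x / ∏ i, Q (x i)) ≤ R + S / Real.sqrt (n : ℝ)}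
      = ∫ θ, f n θ ∂w := by
    intro n hn
    rw [event_eq Q hQ0 n hn (r n) (hr0 n)]
    exact prob_mix w n (fun θ x => ∏ i, P θ (x i)) (hprodi n) _
  refine le_of_forall_lt fun a ha => ?_
  obtain ⟨b, hab, hb⟩ := exists_between ha
  refine lt_of_lt_of_le hab ?_
  refine le_limsup_of_frequently_le ?_ ?_
  · refine Eventually.frequently ?_
    filter_upwards [hmin.eventually (lt_mem_nhds hb), eventually_gt_atTop 0] with n hn hn0
    refine hn.le.trans ?_
    refine le_of_le_of_eq ?_ (hev n hn0).symm
    exact integral_mono_of_nonneg (Eventually.of_forall fun θ => le_min (hf0 n θ) (hh01 θ).1)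
      (hfi n) (Eventually.of_forall fun θ => min_le_left _ _)
  · refine isBoundedUnder_of ⟨1, fun n => ?_⟩
    exact prob_le_one' (r n) (hr0 n) (hr1 n) _
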